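/- arXiv:1608.03860 — 2 statements merged into one kernel-verified Lean document; each statement's English description precedes it below -/
import Mathlib

section
/- For all graphons W, W' and every finite simple graph H with a distinguished labelled vertex 1, the functions y ↦ t_y(H,W) satisfy ∫₀¹ |t_y(H,W) − t_y(H,W')| dy ≤ 2 |E(H)| · ‖W − W'‖_□. -/
/-!
Write `D(y) = t_y(H,W) − t_y(H,W')` and split `[0,1]` into `{D ≥ 0}` and its complement; this
is the source of the factor `2`. On a fixed measurable set `A` of root positions, `∫_A D` is an
integral over `[0,1]^V` of `1_A(x_{v₀})` times a difference of two products over `E(H)`, and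
`telescope` replaces `W'` by `W` one edge at a time. The term for the edge `uw` is
`(W − W')(x_u, x_w)` times a `[0,1]`-valued weight in which no factor involves both `x_u` and
`x_w`. With all other coordinates frozen, that weight has the form `f(x_u) g(x_w)` (`Splits`), so
the term is at most `‖W − W'‖_□` by `integral_weighted_le_cutNorm`: the integral is linear in
`f` and in `g`, hence maximal at indicator functions.
-/

open MeasureTheory Set Filter
open scoped symmDiff

noncomputable section

/-- The unit interval `[0,1]` as a subset of `ℝ`. -/
def I01 : Set ℝ := Set.Icc 0 1

/-- A graphon: a symmetric measurable kernel with values in `[0,1]`. -/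
structure Graphon where
  W : ℝ → ℝ → ℝ
  measurable : Measurable (Function.uncurry W)
  symm : ∀ x y, W x y = W y x
  nonneg : ∀ x y, 0 ≤ W x y
  le_one : ∀ x y, W x y ≤ 1

/-- The cut norm `‖U‖_□` of a kernel `U`. -/
def cutNorm (U : ℝ → ℝ → ℝ) : ℝ :=
  sSup { r | ∃ A B : Set ℝ, MeasurableSet A ∧ MeasurableSet B ∧ A ⊆ I01 ∧ B ⊆ I01 ∧
    r = |∫ x in A, ∫ y in B, U x y| }

/-- Extend an assignment `x` of values to the non-root vertices by the value `y` at the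
root vertex `v₀`. -/
def extFn {V : Type*} [DecidableEq V] (v₀ : V) (y : ℝ) (x : {v : V // v ≠ v₀} → ℝ) (v : V) : ℝ :=
  if h : v = v₀ then y else x ⟨v, h⟩

/-- The `1`-labelled homomorphism density `t_y(H, W)`: the labelled vertex `v₀` is
pinned at `y`, and the coordinates of all other vertices are integrated over `[0,1]`. -/
def homDensity1 {V : Type*} [Fintype V] [DecidableEq V] (H : SimpleGraph V)
    [DecidableRel H.Adj] (v₀ : V) (G : Graphon) (y : ℝ) : ℝ :=
  ∫ x : {v : V // v ≠ v₀} → ℝ,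
    (∏ e ∈ H.edgeFinset,
      Sym2.lift ⟨fun u w => G.W (extFn v₀ y x u) (extFn v₀ y x w),
        fun _ _ => G.symm _ _⟩ e)
    ∂(Measure.pi fun _ => volume.restrict I01)

/-! ### The cut norm with weights -/

/-- The uniform probability measure on `[0,1]`. -/
abbrev μI : Measure ℝ := volume.restrict I01

instance isProbabilityMeasure_μI : IsProbabilityMeasure μI := ⟨by simp [I01]⟩

/-- Among `[0,1]`-valued weights `f`, the indicator of `{F ≥ 0}` maximises `∫ F f`. -/
lemma integral_mul_le_setIntegral {F f : ℝ → ℝ} (hFm : Measurable F)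
    (hF : ∀ a, |F a| ≤ 1) (hfm : Measurable f) (hf : ∀ a, f a ∈ Icc (0 : ℝ) 1) :
    ∫ a, F a * f a ∂μI ≤ ∫ a in {a | 0 ≤ F a}, F a ∂μI := by
  have hA : MeasurableSet {a | 0 ≤ F a} := measurableSet_le measurable_const hFm
  have hFi : Integrable F μI :=
    Integrable.of_bound hFm.aestronglyMeasurable 1 (ae_of_all _ hF)
  rw [← integral_indicator hA]
  refine integral_mono ?_ (hFi.indicator hA) fun a => ?_
  · refine Integrable.of_bound (hFm.mul hfm).aestronglyMeasurable 1 (ae_of_all _ fun a => ?_)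
    rw [Real.norm_eq_abs, abs_mul]
    exact mul_le_one₀ (hF a) (abs_nonneg _) (abs_le.2 ⟨by linarith [(hf a).1], (hf a).2⟩)
  · by_cases h : 0 ≤ F a
    · simp only [indicator, mem_ofPred_eq, h, if_true]
      exact mul_le_of_le_one_right h (hf a).2
    · simp only [indicator, mem_ofPred_eq, h, if_false]
      exact mul_nonpos_of_nonpos_of_nonneg (not_le.1 h).le (hf a).1

lemma abs_setIntegral_le_one {F : ℝ → ℝ} (hF : ∀ a, |F a| ≤ 1) (A : Set ℝ) :
    |∫ a in A, F a ∂μI| ≤ 1 := by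
  have h := norm_integral_le_of_norm_le_const (μ := μI.restrict A) (f := F) (C := 1)
    (ae_of_all _ hF)
  refine h.trans ?_
  rw [one_mul, measureReal_restrict_apply_univ]
  exact measureReal_le_one

lemma abs_integral_le_one {F : ℝ → ℝ} (hF : ∀ a, |F a| ≤ 1) :
    |∫ a, F a ∂μI| ≤ 1 := by
  simpa using abs_setIntegral_le_one hF univ

lemma setIntegral_le_cutNorm {U : ℝ → ℝ → ℝ} (hU : ∀ a b, |U a b| ≤ 1)
    {A B : Set ℝ} (hA : MeasurableSet A) (hB : MeasurableSet B) :
    ∫ a in A, ∫ b in B, U a b ∂μI ∂μI ≤ cutNorm U := by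
  have hI : MeasurableSet I01 := measurableSet_Icc
  refine (le_abs_self _).trans (le_csSup ⟨1, ?_⟩
    ⟨A ∩ I01, B ∩ I01, hA.inter hI, hB.inter hI, inter_subset_right, inter_subset_right, ?_⟩)
  · rintro r ⟨A, B, hA, hB, hAI, hBI, rfl⟩
    have h := abs_setIntegral_le_one (fun a => abs_setIntegral_le_one (hU a) B) A
    simpa only [μI, Measure.restrict_restrict hA, Measure.restrict_restrict hB,
      inter_eq_left.2 hAI, inter_eq_left.2 hBI] using h
  · simp only [μI, Measure.restrict_restrict hA, Measure.restrict_restrict hB]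

lemma cutNorm_sub_comm (U U' : ℝ → ℝ → ℝ) :
    cutNorm (fun x y => U x y - U' x y) = cutNorm fun x y => U' x y - U x y := by
  have h : ∀ A B : Set ℝ, |∫ x in A, ∫ y in B, (U x y - U' x y)| =
      |∫ x in A, ∫ y in B, (U' x y - U x y)| := fun A B => by
    rw [← abs_neg, ← integral_neg]
    simp only [← integral_neg, neg_sub]
  simp only [cutNorm, h]

/-- The functional form of the cut norm: since the integral is linear in each of `f` and `g`,
it is maximised over `[0,1]`-valued weights by indicators. -/
lemma integral_weighted_le_cutNorm {U : ℝ → ℝ → ℝ} (hUm : Measurable (Function.uncurry U))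
    (hU : ∀ a b, |U a b| ≤ 1) {f g : ℝ → ℝ} (hfm : Measurable f) (hgm : Measurable g)
    (hf : ∀ a, f a ∈ Icc (0 : ℝ) 1) (hg : ∀ a, g a ∈ Icc (0 : ℝ) 1) :
    ∫ a, ∫ b, U a b * (f a * g b) ∂μI ∂μI ≤ cutNorm U := by
  have hUg : ∀ a b, |U a b * g b| ≤ 1 := fun a b => by
    rw [abs_mul]
    exact mul_le_one₀ (hU a b) (abs_nonneg _) (abs_le.2 ⟨by linarith [(hg b).1], (hg b).2⟩)
  have hUgm : Measurable (Function.uncurry fun a b => U a b * g b) :=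
    hUm.mul (hgm.comp measurable_snd)
  set F : ℝ → ℝ := fun a => ∫ b, U a b * g b ∂μI with hFdef
  have hFm : Measurable F := (hUgm.stronglyMeasurable.integral_prod_right (ν := μI)).measurable
  have hF : ∀ a, |F a| ≤ 1 := fun a => abs_integral_le_one (hUg a)
  set A := {a | 0 ≤ F a}
  have hA : MeasurableSet A := measurableSet_le measurable_const hFm
  set K : ℝ → ℝ := fun b => ∫ a in A, U a b ∂μI with hKdef
  have hKm : Measurable K :=
    (hUm.stronglyMeasurable.integral_prod_left (μ := μI.restrict A)).measurable
  have hK : ∀ b, |K b| ≤ 1 := fun b => abs_setIntegral_le_one (fun a => hU a b) A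
  set B := {b | 0 ≤ K b}
  have hB : MeasurableSet B := measurableSet_le measurable_const hKm
  calc ∫ a, ∫ b, U a b * (f a * g b) ∂μI ∂μI = ∫ a, F a * f a ∂μI := by
        refine integral_congr_ae (ae_of_all _ fun a => ?_)
        simp only [hFdef, ← integral_mul_const]
        exact integral_congr_ae (ae_of_all _ fun b => by simp only; ring)
    _ ≤ ∫ a in A, F a ∂μI := integral_mul_le_setIntegral hFm hF hfm hf
    _ = ∫ b, K b * g b ∂μI := by
        simp only [hFdef, hKdef, ← integral_mul_const]
        refine integral_integral_swap (Integrable.of_bound hUgm.aestronglyMeasurable 1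
          (ae_of_all _ fun p => hUg p.1 p.2))
    _ ≤ ∫ b in B, K b ∂μI := integral_mul_le_setIntegral hKm hK hgm hg
    _ = ∫ a in A, ∫ b in B, U a b ∂μI ∂μI :=
        (integral_integral_swap (Integrable.of_bound hUm.aestronglyMeasurable 1
          (ae_of_all _ fun p => hU p.1 p.2))).symm
    _ ≤ cutNorm U := setIntegral_le_cutNorm hU hA hB

/-! ### Disintegration of the product measure -/

section Pi

set_option linter.unusedSectionVars false

variable {V : Type*} [Fintype V] [DecidableEq V]

/-- The uniform probability measure on `[0,1]^V`. -/
abbrev μV (V : Type*) [Fintype V] : Measure (V → ℝ) := Measure.pi fun _ => μI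

/-- Resampling the coordinate `u` preserves the product measure. -/
lemma measurePreserving_update (u : V) :
    MeasurePreserving (fun p : (V → ℝ) × ℝ => Function.update p.1 u p.2)
      ((μV V).prod μI) (μV V) := by
  have hm : Measurable (fun p : (V → ℝ) × ℝ => Function.update p.1 u p.2) := by
    refine measurable_pi_iff.2 fun v => ?_
    by_cases h : v = u
    · subst h; simpa using measurable_snd
    · simp only [Function.update_of_ne h]
      fun_prop
  refine ⟨hm, (Measure.pi_eq fun s hs => ?_).symm⟩
  rw [Measure.map_apply hm (MeasurableSet.univ_pi hs)]
  have : (fun p : (V → ℝ) × ℝ => Function.update p.1 u p.2) ⁻¹' (univ.pi s) =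
      (univ.pi (Function.update s u univ)) ×ˢ s u := by
    ext ⟨z, a⟩
    simp only [mem_preimage, mem_univ_pi, mem_prod]
    constructor
    · intro h
      refine ⟨fun v => ?_, by simpa using h u⟩
      by_cases hv : v = u
      · subst hv; simp
      · simpa [hv] using h v
    · rintro ⟨h, ha⟩ v
      by_cases hv : v = u
      · subst hv; simpa using ha
      · simpa [hv] using h v
  rw [this, Measure.prod_prod, Measure.pi_pi, ← Finset.prod_erase_mul _ _ (Finset.mem_univ u),
    ← Finset.prod_erase_mul _ _ (Finset.mem_univ u)]
  simp only [Function.update_self, measure_univ, mul_one]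
  congr 1
  refine Finset.prod_congr rfl fun v hv => ?_
  rw [Function.update_of_ne (Finset.ne_of_mem_erase hv)]

/-- Splitting off the root coordinate preserves the product measure. -/
lemma measurePreserving_extFn (v₀ : V) :
    MeasurePreserving (fun p : ℝ × ({v : V // v ≠ v₀} → ℝ) => extFn v₀ p.1 p.2)
      (μI.prod (μV {v : V // v ≠ v₀})) (μV V) := by
  have hm : Measurable (fun p : ℝ × ({v : V // v ≠ v₀} → ℝ) => extFn v₀ p.1 p.2) := by
    refine measurable_pi_iff.2 fun v => ?_
    by_cases h : v = v₀
    · simpa [extFn, h] using measurable_fst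
    · simp only [extFn, h, dite_false]
      fun_prop
  refine ⟨hm, (Measure.pi_eq fun s hs => ?_).symm⟩
  rw [Measure.map_apply hm (MeasurableSet.univ_pi hs)]
  have : (fun p : ℝ × ({v : V // v ≠ v₀} → ℝ) => extFn v₀ p.1 p.2) ⁻¹' (univ.pi s) =
      s v₀ ×ˢ (univ.pi fun v : {v : V // v ≠ v₀} => s v) := by
    ext ⟨y, x⟩
    simp only [mem_preimage, mem_univ_pi, mem_prod]
    constructor
    · intro h
      exact ⟨by simpa [extFn] using h v₀, fun v => by simpa [extFn, v.2] using h v⟩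
    · rintro ⟨h, hx⟩ v
      by_cases hv : v = v₀
      · subst hv; simpa [extFn] using h
      · simpa [extFn, hv] using hx ⟨v, hv⟩
  rw [this, Measure.prod_prod, Measure.pi_pi, ← Finset.mul_prod_erase _ _ (Finset.mem_univ v₀)]
  congr 1
  refine (Finset.prod_subtype _ (fun v => ?_) fun v => μI (s v)).symm
  simp

/-! ### Edge weights and their factorization -/

/-- The weight `W(x_u, x_w)` of the edge `e = uw` under the vertex assignment `x`. -/
def edgeW (G : Graphon) (x : V → ℝ) (e : Sym2 V) : ℝ :=
  Sym2.lift ⟨fun u w => G.W (x u) (x w), fun _ _ => G.symm _ _⟩ e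

lemma edgeW_mem (G : Graphon) (x : V → ℝ) (e : Sym2 V) : edgeW G x e ∈ Icc (0 : ℝ) 1 := by
  induction e with
  | _ p q => exact ⟨G.nonneg _ _, G.le_one _ _⟩

lemma measurable_edgeW (G : Graphon) (e : Sym2 V) :
    Measurable fun x : V → ℝ => edgeW G x e := by
  induction e with
  | _ p q =>
    have h : Measurable fun x : V → ℝ => (x p, x q) := by fun_prop
    exact G.measurable.comp h

/-- A measurable `[0,1]`-valued function of `x ∈ ℝ^V` which, once all coordinates other than
`u` and `w` are frozen, factors as a function of `x_u` times a function of `x_w`. -/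
structure Splits (u w : V) (R : (V → ℝ) → ℝ) : Prop where
  meas : Measurable R
  mem : ∀ x, R x ∈ Icc (0 : ℝ) 1
  split : ∀ z : V → ℝ, ∃ f g : ℝ → ℝ, Measurable f ∧ Measurable g ∧
    (∀ a, f a ∈ Icc (0 : ℝ) 1) ∧ (∀ b, g b ∈ Icc (0 : ℝ) 1) ∧
    ∀ a b, R (Function.update (Function.update z u a) w b) = f a * g b

lemma mul_mem_Icc01 {a b : ℝ} (ha : a ∈ Icc (0 : ℝ) 1) (hb : b ∈ Icc (0 : ℝ) 1) :
    a * b ∈ Icc (0 : ℝ) 1 :=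
  ⟨mul_nonneg ha.1 hb.1, mul_le_one₀ ha.2 hb.1 hb.2⟩

lemma Splits.mul {u w : V} {R S : (V → ℝ) → ℝ} (hR : Splits u w R) (hS : Splits u w S) :
    Splits u w fun x => R x * S x where
  meas := hR.meas.mul hS.meas
  mem x := mul_mem_Icc01 (hR.mem x) (hS.mem x)
  split z := by
    obtain ⟨f, g, hf, hg, hf', hg', h⟩ := hR.split z
    obtain ⟨k, l, hk, hl, hk', hl', h'⟩ := hS.split z
    refine ⟨fun a => f a * k a, fun b => g b * l b, hf.mul hk, hg.mul hl,
      fun a => mul_mem_Icc01 (hf' a) (hk' a), fun b => mul_mem_Icc01 (hg' b) (hl' b),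
      fun a b => ?_⟩
    rw [h, h']; ring

lemma Splits.prod {ι : Type*} {u w : V} {R : ι → (V → ℝ) → ℝ} (s : Finset ι)
    (hR : ∀ i ∈ s, Splits u w (R i)) : Splits u w fun x => ∏ i ∈ s, R i x := by
  classical
  induction s using Finset.induction_on with
  | empty =>
    exact ⟨by simp, by simp, fun z => ⟨fun _ => 1, fun _ => 1, by simp, by simp, by simp,
      by simp, by simp⟩⟩
  | insert i s hi ih =>
    simp only [Finset.prod_insert hi]
    exact (hR i (Finset.mem_insert_self _ _)).mul
      (ih fun j hj => hR j (Finset.mem_insert_of_mem hj))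

/-- A function that ignores one of the coordinates `u`, `w` splits. -/
lemma Splits.of_ignore {u w : V} (huw : u ≠ w) {R : (V → ℝ) → ℝ} (hm : Measurable R)
    (hmem : ∀ x, R x ∈ Icc (0 : ℝ) 1)
    (h : (∀ x a, R (Function.update x u a) = R x) ∨ (∀ x a, R (Function.update x w a) = R x)) :
    Splits u w R := by
  refine ⟨hm, hmem, fun z => ?_⟩
  rcases h with h | h
  · refine ⟨fun _ => 1, fun b => R (Function.update z w b), measurable_const,
      hm.comp (measurable_update z), by simp, fun b => hmem _, fun a b => ?_⟩
    rw [Function.update_comm huw, h, one_mul]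
  · refine ⟨fun a => R (Function.update z u a), fun _ => 1, hm.comp (measurable_update z),
      measurable_const, fun b => hmem _, by simp, fun a b => ?_⟩
    rw [h, mul_one]

lemma splits_edgeW (G : Graphon) {u w : V} (huw : u ≠ w) {e : Sym2 V} (he : e ≠ s(u, w)) :
    Splits u w fun x => edgeW G x e := by
  refine Splits.of_ignore huw (measurable_edgeW G e) (fun x => edgeW_mem G x e) ?_
  have key : ∀ v, v ∉ e → ∀ (x : V → ℝ) a, edgeW G (Function.update x v a) e = edgeW G x e := by
    induction e with
    | _ p q =>
      intro v hv x a
      simp only [Sym2.mem_iff, not_or] at hv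
      simp [edgeW, Function.update_of_ne (Ne.symm hv.1), Function.update_of_ne (Ne.symm hv.2)]
  by_cases hu : u ∈ e
  · by_cases hw : w ∈ e
    · exact absurd ((Sym2.mem_and_mem_iff huw).1 ⟨hu, hw⟩) he
    · exact Or.inr (key w hw)
  · exact Or.inl (key u hu)

lemma splits_indicator {u w : V} (huw : u ≠ w) (v₀ : V) {A : Set ℝ} (hA : MeasurableSet A) :
    Splits u w fun x => A.indicator (fun _ => (1 : ℝ)) (x v₀) := by
  refine Splits.of_ignore huw ((measurable_const.indicator hA).comp (measurable_pi_apply v₀))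
    (fun x => ?_) ?_
  · by_cases h : x v₀ ∈ A <;> simp [h]
  · by_cases h : v₀ = u
    · right; intro x a
      rw [Function.update_of_ne (by rw [h]; exact huw)]
    · left; intro x a
      rw [Function.update_of_ne h]

/-- Freezing all coordinates but `u` and `w` reduces the integral to the two-variable
estimate `integral_weighted_le_cutNorm`. -/
lemma integral_splits_le_cutNorm {U : ℝ → ℝ → ℝ} (hUm : Measurable (Function.uncurry U))
    (hU : ∀ a b, |U a b| ≤ 1) {u w : V} (huw : u ≠ w) {R : (V → ℝ) → ℝ} (hR : Splits u w R) :
    ∫ x, U (x u) (x w) * R x ∂(μV V) ≤ cutNorm U := by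
  set F : (V → ℝ) → ℝ := fun x => U (x u) (x w) * R x with hF
  have hpair : Measurable fun x : V → ℝ => (x u, x w) := by fun_prop
  have hFm : Measurable F := (hUm.comp hpair).mul hR.meas
  have hFb : ∀ x, |F x| ≤ 1 := fun x => by
    rw [hF, abs_mul, abs_of_nonneg (hR.mem x).1]
    exact mul_le_one₀ (hU _ _) (hR.mem x).1 (hR.mem x).2
  have hint : ∀ {k : (V → ℝ) → ℝ}, Measurable k → (∀ x, |k x| ≤ 1) → ∀ v,
      Integrable (fun p : (V → ℝ) × ℝ => k (Function.update p.1 v p.2)) ((μV V).prod μI) :=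
    fun hk hk' v => Integrable.of_bound
      (hk.comp (measurePreserving_update v).measurable).aestronglyMeasurable 1
      (ae_of_all _ fun p => hk' _)
  have hresample : ∀ {k : (V → ℝ) → ℝ}, Measurable k → (∀ x, |k x| ≤ 1) → ∀ v,
      ∫ x, k x ∂(μV V) = ∫ z, ∫ a, k (Function.update z v a) ∂μI ∂(μV V) := by
    intro k hk hk' v
    rw [← integral_prod _ (hint hk hk' v), ← (measurePreserving_update v).map_eq,
      integral_map (measurePreserving_update v).measurable.aemeasurable
        hk.aestronglyMeasurable, (measurePreserving_update v).map_eq]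
  set F₁ : (V → ℝ) → ℝ := fun z => ∫ b, F (Function.update z w b) ∂μI with hF₁
  have hF₁m : Measurable F₁ := ((hFm.comp
    (measurePreserving_update w).measurable).stronglyMeasurable.integral_prod_right'
      (ν := μI)).measurable
  have hF₁b : ∀ z, |F₁ z| ≤ 1 := fun z => abs_integral_le_one fun b => hFb _
  rw [hresample hFm hFb w, hresample hF₁m hF₁b u]
  calc _ ≤ ∫ _z : V → ℝ, cutNorm U ∂(μV V) := by
        refine integral_mono (hint hF₁m hF₁b u).integral_prod_left (integrable_const _)
          fun z => ?_
        obtain ⟨f, g, hf, hg, hf', hg', h⟩ := hR.split z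
        have := integral_weighted_le_cutNorm hUm hU hf hg hf' hg'
        simpa [hF₁, hF, h, Function.update_of_ne huw] using this
    _ = cutNorm U := by simp

/-! ### Telescoping over the edges -/

/-- The telescoping estimate: replacing `W'` by `W` on the edges of `S` one at a time, with the
edges of `T` kept at `W'`, costs at most one cut norm per edge. -/
lemma telescope (G G' : Graphon) (v₀ : V) {A : Set ℝ} (hA : MeasurableSet A)
    (S : Finset (Sym2 V)) : ∀ T : Finset (Sym2 V), Disjoint S T → (∀ e ∈ S, ¬ e.IsDiag) →
    ∫ x, A.indicator (fun _ => (1 : ℝ)) (x v₀) * (∏ e ∈ T, edgeW G' x e) *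
      (∏ e ∈ S, edgeW G x e - ∏ e ∈ S, edgeW G' x e) ∂(μV V)
      ≤ S.card * cutNorm fun x y => G.W x y - G'.W x y := by
  have hprod : ∀ (G : Graphon) (S : Finset (Sym2 V)) x,
      ∏ e ∈ S, edgeW G x e ∈ Icc (0 : ℝ) 1 := fun G S x =>
    ⟨Finset.prod_nonneg fun e _ => (edgeW_mem G x e).1,
      Finset.prod_le_one (fun e _ => (edgeW_mem G x e).1) fun e _ => (edgeW_mem G x e).2⟩
  have hprodm : ∀ (G : Graphon) (S : Finset (Sym2 V)),
      Measurable fun x : V → ℝ => ∏ e ∈ S, edgeW G x e := fun G S =>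
    Finset.measurable_prod _ fun e _ => measurable_edgeW G e
  have hind : ∀ x : V → ℝ, A.indicator (fun _ => (1 : ℝ)) (x v₀) ∈ Icc (0 : ℝ) 1 := fun x => by
    by_cases h : x v₀ ∈ A <;> simp [h]
  have hindm : Measurable fun x : V → ℝ => A.indicator (fun _ => (1 : ℝ)) (x v₀) :=
    (measurable_const.indicator hA).comp (measurable_pi_apply v₀)
  have hbd : ∀ {a b c : ℝ}, a ∈ Icc (0 : ℝ) 1 → b ∈ Icc (0 : ℝ) 1 → c ∈ Icc (0 : ℝ) 1 →
      |a * (b - c)| ≤ 1 := fun {a b c} ha hb hc => by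
    rw [abs_mul, abs_of_nonneg ha.1]
    exact mul_le_one₀ ha.2 (abs_nonneg _)
      (abs_le.2 ⟨by linarith [hb.1, hc.2], by linarith [hb.2, hc.1]⟩)
  induction S using Finset.induction_on with
  | empty => intro T _ _; simp
  | insert e S he ih =>
    intro T hST hdiag
    rw [Finset.disjoint_insert_left] at hST
    have hdiag' : ∀ e ∈ S, ¬ e.IsDiag := fun e h => hdiag e (Finset.mem_insert_of_mem h)
    have h2 := ih (insert e T) (Finset.disjoint_insert_right.2 ⟨he, hST.2⟩) hdiag'
    have hedge : ∫ x, (edgeW G x e - edgeW G' x e) *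
        (A.indicator (fun _ => (1 : ℝ)) (x v₀) * (∏ e ∈ T, edgeW G' x e) *
          ∏ e ∈ S, edgeW G x e) ∂(μV V) ≤ cutNorm fun x y => G.W x y - G'.W x y := by
      have hd := hdiag e (Finset.mem_insert_self _ _)
      clear h2 ih hdiag
      induction e with
      | _ u w =>
        have huw : u ≠ w := hd
        refine integral_splits_le_cutNorm (U := fun x y => G.W x y - G'.W x y)
          (G.measurable.sub G'.measurable) (fun a b => ?_) huw
          (((splits_indicator huw v₀ hA).mul (Splits.prod T fun e' he' =>
            splits_edgeW G' huw ?_)).mul (Splits.prod S fun e' he' => splits_edgeW G huw ?_))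
        · simpa using hbd (a := 1) (by simp) ⟨G.nonneg a b, G.le_one a b⟩
            ⟨G'.nonneg a b, G'.le_one a b⟩
        · rintro rfl; exact hST.1 he'
        · rintro rfl; exact he he'
    have hsplit : ∀ x : V → ℝ, A.indicator (fun _ => (1 : ℝ)) (x v₀) *
        (∏ e ∈ T, edgeW G' x e) *
        (∏ e ∈ insert e S, edgeW G x e - ∏ e ∈ insert e S, edgeW G' x e) =
        (edgeW G x e - edgeW G' x e) * (A.indicator (fun _ => (1 : ℝ)) (x v₀) *
          (∏ e ∈ T, edgeW G' x e) * ∏ e ∈ S, edgeW G x e) +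
        A.indicator (fun _ => (1 : ℝ)) (x v₀) * (∏ e ∈ insert e T, edgeW G' x e) *
          (∏ e ∈ S, edgeW G x e - ∏ e ∈ S, edgeW G' x e) := fun x => by
      rw [Finset.prod_insert he, Finset.prod_insert he, Finset.prod_insert hST.1]
      ring
    simp only [hsplit]
    rw [integral_add, Finset.card_insert_of_notMem he]
    · push_cast
      linarith
    · refine Integrable.of_bound (((measurable_edgeW G e).sub (measurable_edgeW G' e)).mul
        ((hindm.mul (hprodm G' T)).mul (hprodm G S))).aestronglyMeasurable 1
        (ae_of_all _ fun x => ?_)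
      rw [mul_comm]
      exact hbd (mul_mem_Icc01 (mul_mem_Icc01 (hind x) (hprod _ _ x)) (hprod _ _ x))
        (edgeW_mem G x e) (edgeW_mem G' x e)
    · refine Integrable.of_bound ((hindm.mul (hprodm G' _)).mul
        ((hprodm G S).sub (hprodm G' S))).aestronglyMeasurable 1 (ae_of_all _ fun x => ?_)
      exact hbd (mul_mem_Icc01 (hind x) (hprod _ _ x)) (hprod _ _ x) (hprod _ _ x)

/-! ### Densities as integrals over all vertices -/

lemma measurable_prod_edgeW (H : SimpleGraph V) [DecidableRel H.Adj] (G : Graphon) :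
    Measurable fun x : V → ℝ => ∏ e ∈ H.edgeFinset, edgeW G x e :=
  Finset.measurable_prod _ fun e _ => measurable_edgeW G e

lemma prod_edgeW_mem (H : SimpleGraph V) [DecidableRel H.Adj] (G : Graphon) (x : V → ℝ) :
    ∏ e ∈ H.edgeFinset, edgeW G x e ∈ Icc (0 : ℝ) 1 :=
  ⟨Finset.prod_nonneg fun e _ => (edgeW_mem G x e).1,
    Finset.prod_le_one (fun e _ => (edgeW_mem G x e).1) fun e _ => (edgeW_mem G x e).2⟩

lemma homDensity1_eq (H : SimpleGraph V) [DecidableRel H.Adj] (v₀ : V) (G : Graphon) (y : ℝ) :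
    homDensity1 H v₀ G y = ∫ x, ∏ e ∈ H.edgeFinset, edgeW G (extFn v₀ y x) e
      ∂(μV {v : V // v ≠ v₀}) := rfl

lemma measurable_homDensity1 (H : SimpleGraph V) [DecidableRel H.Adj] (v₀ : V) (G : Graphon) :
    Measurable (homDensity1 H v₀ G) :=
  (((measurable_prod_edgeW H G).comp
    (measurePreserving_extFn v₀).measurable).stronglyMeasurable.integral_prod_right'
      (ν := μV {v : V // v ≠ v₀})).measurable

lemma integrable_homDensity1 (H : SimpleGraph V) [DecidableRel H.Adj] (v₀ : V) (G : Graphon) :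
    Integrable (homDensity1 H v₀ G) μI := by
  have : Integrable (fun p : ℝ × ({v : V // v ≠ v₀} → ℝ) =>
      ∏ e ∈ H.edgeFinset, edgeW G (extFn v₀ p.1 p.2) e) (μI.prod (μV {v : V // v ≠ v₀})) :=
    Integrable.of_bound ((measurable_prod_edgeW H G).comp
      (measurePreserving_extFn v₀).measurable).aestronglyMeasurable 1
      (ae_of_all _ fun p => by
        have h := prod_edgeW_mem H G (extFn v₀ p.1 p.2)
        rw [Real.norm_eq_abs, abs_of_nonneg h.1]; exact h.2)
  exact this.integral_prod_left

lemma integral_indicator_mul_homDensity1 (H : SimpleGraph V) [DecidableRel H.Adj] (v₀ : V)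
    (G : Graphon) {A : Set ℝ} (hA : MeasurableSet A) :
    Integrable (fun x : V → ℝ => A.indicator (fun _ => (1 : ℝ)) (x v₀) *
      ∏ e ∈ H.edgeFinset, edgeW G x e) (μV V) ∧
    ∫ y in A, homDensity1 H v₀ G y ∂μI =
      ∫ x, A.indicator (fun _ => (1 : ℝ)) (x v₀) * ∏ e ∈ H.edgeFinset, edgeW G x e ∂(μV V) := by
  have hm : Measurable fun x : V → ℝ => A.indicator (fun _ => (1 : ℝ)) (x v₀) *
      ∏ e ∈ H.edgeFinset, edgeW G x e :=
    ((measurable_const.indicator hA).comp (measurable_pi_apply v₀)).mul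
      (measurable_prod_edgeW H G)
  have hb : ∀ x : V → ℝ, ‖A.indicator (fun _ => (1 : ℝ)) (x v₀) *
      ∏ e ∈ H.edgeFinset, edgeW G x e‖ ≤ 1 := fun x => by
    have h : A.indicator (fun _ => (1 : ℝ)) (x v₀) ∈ Icc (0 : ℝ) 1 := by
      by_cases h : x v₀ ∈ A <;> simp [h]
    have h' := mul_mem_Icc01 h (prod_edgeW_mem H G x)
    rw [Real.norm_eq_abs, abs_of_nonneg h'.1]; exact h'.2
  have hmp := measurePreserving_extFn v₀
  refine ⟨Integrable.of_bound hm.aestronglyMeasurable 1 (ae_of_all _ hb), ?_⟩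
  have hi : Integrable (fun p : ℝ × ({v : V // v ≠ v₀} → ℝ) =>
      A.indicator (fun _ => (1 : ℝ)) (extFn v₀ p.1 p.2 v₀) *
        ∏ e ∈ H.edgeFinset, edgeW G (extFn v₀ p.1 p.2) e) (μI.prod (μV {v : V // v ≠ v₀})) :=
    Integrable.of_bound (hm.comp hmp.measurable).aestronglyMeasurable 1
      (ae_of_all _ fun p => hb _)
  rw [← hmp.map_eq, integral_map hmp.measurable.aemeasurable hm.aestronglyMeasurable,
    integral_prod _ hi, ← integral_indicator hA]
  refine integral_congr_ae (ae_of_all _ fun y => ?_)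
  simp only [integral_const_mul, extFn, dite_true]
  by_cases hy : y ∈ A
  · simp only [indicator_of_mem hy, one_mul]; rfl
  · simp [hy]

/-- The one-sided bound on an arbitrary measurable set of root positions. -/
lemma setIntegral_homDensity1_sub_le (H : SimpleGraph V) [DecidableRel H.Adj] (v₀ : V)
    (G G' : Graphon) {A : Set ℝ} (hA : MeasurableSet A) :
    ∫ y in A, (homDensity1 H v₀ G y - homDensity1 H v₀ G' y) ∂μI
      ≤ H.edgeFinset.card * cutNorm fun x y => G.W x y - G'.W x y := by
  obtain ⟨hi, he⟩ := integral_indicator_mul_homDensity1 H v₀ G hA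
  obtain ⟨hi', he'⟩ := integral_indicator_mul_homDensity1 H v₀ G' hA
  rw [integral_sub (integrable_homDensity1 H v₀ G).integrableOn
    (integrable_homDensity1 H v₀ G').integrableOn, he, he', ← integral_sub hi hi']
  have h := telescope G G' v₀ hA H.edgeFinset ∅ (Finset.disjoint_empty_right _)
    fun e he => H.not_isDiag_of_mem_edgeFinset he
  simpa only [Finset.prod_empty, mul_one, mul_sub] using h

end Pi

/-- **`L¹`-continuity of `1`-labelled homomorphism densities in the cut norm:**
`∫₀¹ |t_y(H,W) − t_y(H,W')| dy ≤ 2 |E(H)| ‖W − W'‖_□`. -/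
theorem homDensity1_L1_bound
    {V : Type*} [Fintype V] [DecidableEq V] (H : SimpleGraph V)
    [DecidableRel H.Adj] (v₀ : V) (G G' : Graphon) :
    (∫ y in I01, |homDensity1 H v₀ G y - homDensity1 H v₀ G' y|)
      ≤ 2 * H.edgeFinset.card * cutNorm fun x y => G.W x y - G'.W x y := by
  set D : ℝ → ℝ := fun y => homDensity1 H v₀ G y - homDensity1 H v₀ G' y with hD
  have hA : MeasurableSet {y | 0 ≤ D y} := measurableSet_le measurable_const
    ((measurable_homDensity1 H v₀ G).sub (measurable_homDensity1 H v₀ G'))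
  have hDi : Integrable D μI :=
    (integrable_homDensity1 H v₀ G).sub (integrable_homDensity1 H v₀ G')
  have h1 := setIntegral_homDensity1_sub_le H v₀ G G' hA
  have h2 := setIntegral_homDensity1_sub_le H v₀ G' G hA.compl
  rw [cutNorm_sub_comm] at h2
  have e1 : ∫ y in {y | 0 ≤ D y}, |D y| ∂μI = ∫ y in {y | 0 ≤ D y}, D y ∂μI :=
    setIntegral_congr_fun hA fun y hy => abs_of_nonneg hy
  have e2 : ∫ y in {y | 0 ≤ D y}ᶜ, |D y| ∂μI =
      ∫ y in {y | 0 ≤ D y}ᶜ, (homDensity1 H v₀ G' y - homDensity1 H v₀ G y) ∂μI :=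
    setIntegral_congr_fun hA.compl fun y hy => by
      simp only [mem_compl_iff, mem_ofPred_eq, not_le] at hy
      exact (abs_of_neg hy).trans (neg_sub _ _)
  change ∫ y, |D y| ∂μI ≤ _
  rw [← integral_add_compl hA hDi.abs, e1, e2]
  linarith

end
end

section
/- Fix a finite simple graph H, graphons W_e and W'_e for every edge e ∈ E(H), and measurable subsets F_v ⊆ [0,1] for every vertex v ∈ V(H). Define the generalized homomorphism density t_F(H, W) := ∫_{×_{v∈V(H)} F_v} ∏_{e∈E(H)} W_e(x_{e_s}, x_{e_t}) ∏_{v∈V(H)} dx_v, and similarly t_F(H, W') with W'_e in place of W_e. Then |t_F(H, W) − t_F(H, W')| ≤ Σ_{e∈E(H)} (∏_{v ≠ e_s, e_t} μ(F_v)) · min{ μ(F_{e_s}) μ(F_{e_t}), ‖W_e − W'_e‖_□ }, where μ is Lebesgue measure. -/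
/-!
The edges are replaced one at a time: interpolating between `W'` and `W` through the families that
agree with `W` on a set `S` of edges and with `W'` elsewhere, the triangle inequality reduces the
claim to two families that differ at a single edge `e = uw` (`tGen_sub_le_of_eq_off`).

For such families the difference of densities is the integral of `U(x_u, x_w) P(x)`, where
`U = W_e - W'_e` and `P` is the product over the other edges. As `|U P| ≤ 1`, it is at most
`∏_v μ(F_v)`. For the cut-norm bound, fix all coordinates but `x_u` and `x_w` (Fubini, in the form of
`measurePreserving_glue`). No other edge contains both `u` and `w`, so `P` becomes `f(x_u) g(x_w)`
with `f`, `g` valued in `[0,1]`, and the inner integral is at most `‖U‖_□`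
(`abs_integral_mul_mul_le_cutNorm`). That last bound holds since `∫ f h` with `0 ≤ f ≤ 1` is dominated
in absolute value by `∫_S h` with `S = {h > 0}` or `S = {h < 0}`; this turns first `f` and then `g`
into an indicator function.
-/

open MeasureTheory Set Filter

noncomputable section

/-- The generalized homomorphism density of a graph `H`, a family of graphons `Wf e`
indexed by the edges of `H`, and sets `F v ⊆ [0,1]` indexed by the vertices:
`t_F(H, W) = ∫_{×_v F_v} ∏_{e ∈ E(H)} W_e(x_{e_s}, x_{e_t}) ∏_v dx_v`. -/
def tGen {V : Type*} [Fintype V] [DecidableEq V] (H : SimpleGraph V)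
    [DecidableRel H.Adj] (Wf : Sym2 V → Graphon) (F : V → Set ℝ) : ℝ :=
  ∫ x : V → ℝ,
    (∏ e ∈ H.edgeFinset,
      Sym2.lift ⟨fun u w => (Wf e).W (x u) (x w), fun _ _ => (Wf e).symm _ _⟩ e)
    ∂(Measure.pi fun v => volume.restrict (F v))

/-! ### The cut norm tested against `[0,1]`-valued functions -/

/-- A weight with values in `[0,1]` can be replaced by the indicator of a measurable set. -/
lemma exists_abs_integral_mul_le {μ : Measure ℝ} {f h : ℝ → ℝ}
    (hf : Measurable f) (hf0 : ∀ x, 0 ≤ f x) (hf1 : ∀ x, f x ≤ 1)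
    (hh : Measurable h) (hint : Integrable h μ) :
    ∃ S : Set ℝ, MeasurableSet S ∧ |∫ x, f x * h x ∂μ| ≤ |∫ x in S, h x ∂μ| := by
  have hfh : Integrable (fun x => f x * h x) μ := by
    refine hint.mono (hf.mul hh).aestronglyMeasurable (ae_of_all _ fun x => ?_)
    rw [norm_mul, Real.norm_of_nonneg (hf0 x)]
    exact mul_le_of_le_one_left (norm_nonneg _) (hf1 x)
  rcases le_total 0 (∫ x, f x * h x ∂μ) with hs | hs
  · have hS : MeasurableSet {x | 0 < h x} := measurableSet_lt measurable_const hh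
    refine ⟨{x | 0 < h x}, hS, ?_⟩
    rw [abs_of_nonneg hs]
    refine le_trans ?_ (le_abs_self _)
    rw [← integral_indicator hS]
    refine integral_mono hfh (hint.indicator hS) fun x => ?_
    by_cases hx : 0 < h x
    · rw [indicator_of_mem (s := {x | 0 < h x}) hx]
      exact mul_le_of_le_one_left hx.le (hf1 x)
    · rw [indicator_of_notMem (s := {x | 0 < h x}) hx]
      exact mul_nonpos_of_nonneg_of_nonpos (hf0 x) (not_lt.mp hx)
  · have hS : MeasurableSet {x | h x < 0} := measurableSet_lt hh measurable_const
    refine ⟨{x | h x < 0}, hS, ?_⟩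
    rw [abs_of_nonpos hs]
    refine le_trans ?_ (neg_le_abs _)
    rw [neg_le_neg_iff, ← integral_indicator hS]
    refine integral_mono (hint.indicator hS) hfh fun x => ?_
    by_cases hx : h x < 0
    · rw [indicator_of_mem (s := {x | h x < 0}) hx]
      nlinarith [hf0 x, hf1 x]
    · rw [indicator_of_notMem (s := {x | h x < 0}) hx]
      exact mul_nonneg (hf0 x) (not_lt.mp hx)

lemma volume_lt_top_of_subset_I01 {A : Set ℝ} (hA : A ⊆ I01) : volume A < ⊤ :=
  (measure_mono hA).trans_lt (by simp [I01])

lemma volume_real_le_one_of_subset_I01 {A : Set ℝ} (hA : A ⊆ I01) : volume.real A ≤ 1 := by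
  have := measureReal_mono (μ := volume) hA (by simp [I01])
  simpa [I01] using this

/-- The supremum in the definition of `cutNorm` is over a bounded set when `|U| ≤ 1`, so that it is
not a junk value. -/
lemma abs_integral_le_cutNorm {U : ℝ → ℝ → ℝ} (hU1 : ∀ x y, |U x y| ≤ 1)
    {A B : Set ℝ} (hA : MeasurableSet A) (hB : MeasurableSet B) (hAI : A ⊆ I01) (hBI : B ⊆ I01) :
    |∫ x in A, ∫ y in B, U x y| ≤ cutNorm U := by
  refine le_csSup ⟨1, ?_⟩ ⟨A, B, hA, hB, hAI, hBI, rfl⟩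
  rintro r ⟨A, B, -, -, hAI, hBI, rfl⟩
  have h1 : ∀ x, ‖∫ y in B, U x y‖ ≤ 1 := fun x => by
    have := norm_setIntegral_le_of_norm_le_const (f := U x) (volume_lt_top_of_subset_I01 hBI)
      (fun y _ => hU1 x y)
    linarith [volume_real_le_one_of_subset_I01 hBI]
  have := norm_setIntegral_le_of_norm_le_const (f := fun x => ∫ y in B, U x y)
    (volume_lt_top_of_subset_I01 hAI) (fun x _ => h1 x)
  rw [Real.norm_eq_abs] at this
  linarith [volume_real_le_one_of_subset_I01 hAI]

lemma integrable_of_abs_le_one {α : Type*} [MeasurableSpace α] {μ : Measure α} [IsFiniteMeasure μ]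
    {f : α → ℝ} (hf : Measurable f) (h1 : ∀ x, |f x| ≤ 1) : Integrable f μ :=
  Integrable.of_bound hf.aestronglyMeasurable 1 (ae_of_all _ h1)

/-- The cut norm also bounds integrals against products of `[0,1]`-valued functions. -/
lemma abs_integral_mul_mul_le_cutNorm {U : ℝ → ℝ → ℝ} (hU : Measurable (Function.uncurry U))
    (hU1 : ∀ x y, |U x y| ≤ 1) {A B : Set ℝ} (hA : MeasurableSet A) (hB : MeasurableSet B)
    (hAI : A ⊆ I01) (hBI : B ⊆ I01) {f g : ℝ → ℝ} (hf : Measurable f) (hg : Measurable g)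
    (hf0 : ∀ x, 0 ≤ f x) (hf1 : ∀ x, f x ≤ 1) (hg0 : ∀ x, 0 ≤ g x) (hg1 : ∀ x, g x ≤ 1) :
    |∫ x in A, ∫ y in B, U x y * (f x * g y)| ≤ cutNorm U := by
  have fin : ∀ {C : Set ℝ}, C ⊆ I01 → IsFiniteMeasure (volume.restrict C) := fun hC =>
    ⟨by simpa using volume_lt_top_of_subset_I01 hC⟩
  have := fin hAI
  have := fin hBI
  have hUg1 : ∀ x y, |U x y * g y| ≤ 1 := fun x y => by
    rw [abs_mul, abs_of_nonneg (hg0 y)]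
    exact mul_le_one₀ (hU1 x y) (hg0 y) (hg1 y)
  have hUg : Measurable (Function.uncurry fun x y => U x y * g y) :=
    hU.mul (hg.comp measurable_snd)
  obtain ⟨S, hS, hS'⟩ := exists_abs_integral_mul_le (μ := volume.restrict A) hf hf0 hf1
    (h := fun x => ∫ y in B, U x y * g y)
    (hUg.stronglyMeasurable.integral_prod_right (ν := volume.restrict B)).measurable
    (integrable_of_abs_le_one (μ := (volume.restrict A).prod (volume.restrict B)) hUg
      (fun p => hUg1 p.1 p.2)).integral_prod_left
  have e1 : ∀ x, ∫ y in B, U x y * (f x * g y) = f x * ∫ y in B, U x y * g y := fun x => by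
    rw [← integral_const_mul]
    congr 1 with y
    ring
  simp_rw [e1]
  refine hS'.trans ?_
  rw [Measure.restrict_restrict hS]
  have hSI : S ∩ A ⊆ I01 := inter_subset_right.trans hAI
  have := fin hSI
  rw [integral_integral_swap (integrable_of_abs_le_one hUg (fun p => hUg1 p.1 p.2))]
  have hU' : Measurable (Function.uncurry fun y x => U x y) := hU.comp measurable_swap
  obtain ⟨T, hT, hT'⟩ := exists_abs_integral_mul_le (μ := volume.restrict B) hg hg0 hg1
    (h := fun y => ∫ x in S ∩ A, U x y)
    (hU'.stronglyMeasurable.integral_prod_right (ν := volume.restrict (S ∩ A))).measurable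
    (integrable_of_abs_le_one (μ := (volume.restrict B).prod (volume.restrict (S ∩ A))) hU'
      (fun p => hU1 p.2 p.1)).integral_prod_left
  have e2 : ∀ y, ∫ x in S ∩ A, U x y * g y = g y * ∫ x in S ∩ A, U x y := fun y => by
    rw [integral_mul_const, mul_comm]
  simp_rw [e2]
  refine hT'.trans ?_
  rw [Measure.restrict_restrict hT]
  have hTI : T ∩ B ⊆ I01 := inter_subset_right.trans hBI
  have := fin hTI
  rw [integral_integral_swap (integrable_of_abs_le_one hU' (fun p => hU1 p.2 p.1))]
  exact abs_integral_le_cutNorm hU1 (hS.inter hA) (hT.inter hB) hSI hTI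

/-! ### Splitting off two coordinates -/

section Glue

variable {V : Type*} [DecidableEq V]

/-- The point of `ℝ^V` with coordinate `p.1.1` at `u`, `p.1.2` at `w`, and `p.2` elsewhere. -/
def glue (u w : V) (p : (ℝ × ℝ) × ({v // v ∉ s(u, w)} → ℝ)) : V → ℝ := fun v =>
  if h : v ∈ s(u, w) then (if v = u then p.1.1 else p.1.2) else p.2 ⟨v, h⟩

lemma measurable_glue (u w : V) : Measurable (glue u w) := by
  refine measurable_pi_lambda _ fun v => ?_
  unfold glue
  by_cases h : v ∈ s(u, w)
  · by_cases h' : v = u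
    · subst h'
      simp only [h, if_true, dite_true]
      fun_prop
    · simp only [h, h', if_false, dite_true]
      fun_prop
  · simp only [h, dite_false]
    fun_prop

variable [Fintype V]

lemma filter_mem_sym2 (u w : V) : Finset.univ.filter (fun v => v ∈ s(u, w)) = {u, w} := by
  ext v
  simp

/-- Gluing coordinates transports the product measure, which is Fubini's theorem for two
distinguished coordinates. -/
lemma measurePreserving_glue (μ : V → Measure ℝ) [∀ v, SigmaFinite (μ v)] {u w : V} (huw : u ≠ w) :
    MeasurePreserving (glue u w)
      (((μ u).prod (μ w)).prod (Measure.pi fun v : {v // v ∉ s(u, w)} => μ v)) (Measure.pi μ) := by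
  refine ⟨measurable_glue u w, (Measure.pi_eq fun s hs => ?_).symm⟩
  rw [Measure.map_apply (measurable_glue u w) (MeasurableSet.univ_pi hs)]
  have hpre : glue u w ⁻¹' univ.pi s =
      (s u ×ˢ s w) ×ˢ (univ.pi fun v : {v // v ∉ s(u, w)} => s v) := by
    ext p
    simp only [mem_preimage, mem_univ_pi, mem_prod]
    constructor
    · intro h
      refine ⟨⟨?_, ?_⟩, fun v => ?_⟩
      · simpa [glue] using h u
      · simpa [glue, huw.symm] using h w
      · have := h v
        rwa [glue, dif_neg v.2] at this
    · rintro ⟨⟨h1, h2⟩, h3⟩ v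
      unfold glue
      split_ifs with h h'
      · exact h' ▸ h1
      · rcases Sym2.mem_iff.mp h with rfl | rfl
        · exact absurd rfl h'
        · exact h2
      · exact h3 ⟨v, h⟩
  rw [hpre, Measure.prod_prod, Measure.prod_prod, Measure.pi_pi,
    ← Finset.prod_filter_mul_prod_filter_not Finset.univ (fun v => v ∈ s(u, w)) (fun v => μ v (s v)),
    filter_mem_sym2, Finset.prod_pair huw]
  congr 1
  exact (Finset.prod_subtype _ (by simp) (fun v => μ v (s v))).symm

end Glue

/-! ### Edge factors -/

section Edge

variable {V : Type*}

lemma measurable_eval_pair (u w : V) : Measurable fun x : V → ℝ => (x u, x w) :=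
  (measurable_pi_apply u).prodMk (measurable_pi_apply w)

lemma abs_sub_le_one_of_unit {a b : ℝ} (ha0 : 0 ≤ a) (ha1 : a ≤ 1) (hb0 : 0 ≤ b) (hb1 : b ≤ 1) :
    |a - b| ≤ 1 :=
  abs_le.mpr ⟨by linarith, by linarith⟩

/-- The factor `G(x_{e_s}, x_{e_t})` contributed by the edge `e` to the integrand of `tGen`. -/
def edgeVal (G : Graphon) (e : Sym2 V) (x : V → ℝ) : ℝ :=
  Sym2.lift ⟨fun u w => G.W (x u) (x w), fun _ _ => G.symm _ _⟩ e

lemma edgeVal_mk (G : Graphon) (u w : V) (x : V → ℝ) : edgeVal G s(u, w) x = G.W (x u) (x w) := rfl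

lemma edgeVal_nonneg (G : Graphon) (e : Sym2 V) (x : V → ℝ) : 0 ≤ edgeVal G e x := by
  induction e with | h u w => exact G.nonneg _ _

lemma edgeVal_le_one (G : Graphon) (e : Sym2 V) (x : V → ℝ) : edgeVal G e x ≤ 1 := by
  induction e with | h u w => exact G.le_one _ _

lemma measurable_edgeVal (G : Graphon) (e : Sym2 V) : Measurable (edgeVal G e) := by
  induction e with
  | h u w => exact G.measurable.comp (measurable_eval_pair u w)

lemma edgeVal_congr (G : Graphon) (e : Sym2 V) {x y : V → ℝ} (h : ∀ v ∈ e, x v = y v) :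
    edgeVal G e x = edgeVal G e y := by
  induction e with
  | h u w => rw [edgeVal_mk, edgeVal_mk, h u (by simp), h w (by simp)]

/-- The product of the factors of the edges in `E`. -/
def edgeProd (G : Sym2 V → Graphon) (E : Finset (Sym2 V)) (x : V → ℝ) : ℝ :=
  ∏ e ∈ E, edgeVal (G e) e x

lemma edgeProd_nonneg (G : Sym2 V → Graphon) (E : Finset (Sym2 V)) (x : V → ℝ) :
    0 ≤ edgeProd G E x :=
  Finset.prod_nonneg fun _ _ => edgeVal_nonneg _ _ _

lemma edgeProd_le_one (G : Sym2 V → Graphon) (E : Finset (Sym2 V)) (x : V → ℝ) :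
    edgeProd G E x ≤ 1 :=
  Finset.prod_le_one (fun _ _ => edgeVal_nonneg _ _ _) fun _ _ => edgeVal_le_one _ _ _

lemma measurable_edgeProd (G : Sym2 V → Graphon) (E : Finset (Sym2 V)) :
    Measurable (edgeProd G E) :=
  Finset.measurable_fun_prod _ fun _ _ => measurable_edgeVal _ _

lemma edgeProd_congr (G : Sym2 V → Graphon) (E : Finset (Sym2 V)) {x y : V → ℝ}
    (h : ∀ e ∈ E, ∀ v ∈ e, x v = y v) : edgeProd G E x = edgeProd G E y :=
  Finset.prod_congr rfl fun e he => edgeVal_congr _ _ (h e he)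

lemma abs_graphon_sub_le_one (G G' : Graphon) (x y : ℝ) : |G.W x y - G'.W x y| ≤ 1 :=
  abs_sub_le_one_of_unit (G.nonneg x y) (G.le_one x y) (G'.nonneg x y) (G'.le_one x y)

variable [Fintype V] [DecidableEq V]

/-- The cut-norm bound for a single edge `uw`, integrated against any product of factors of other
edges. -/
lemma abs_integral_edge_le (G G' : Graphon) (K : Sym2 V → Graphon) (E : Finset (Sym2 V))
    {u w : V} (huw : u ≠ w) (hE : s(u, w) ∉ E) (F : V → Set ℝ)
    (hFmeas : ∀ v, MeasurableSet (F v)) (hFsub : ∀ v, F v ⊆ I01) :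
    |∫ x : V → ℝ, (G.W (x u) (x w) - G'.W (x u) (x w)) * edgeProd K E x
        ∂(Measure.pi fun v => volume.restrict (F v))| ≤
      (∏ v ∈ Finset.univ.filter (fun v => v ∉ s(u, w)), (volume (F v)).toReal) *
        cutNorm fun x y => G.W x y - G'.W x y := by
  have fin : ∀ v, IsFiniteMeasure (volume.restrict (F v)) := fun v =>
    ⟨by simpa using volume_lt_top_of_subset_I01 (hFsub v)⟩
  set U : ℝ → ℝ → ℝ := fun x y => G.W x y - G'.W x y with hUdef
  have hU : Measurable (Function.uncurry U) := G.measurable.sub G'.measurable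
  have hU1 : ∀ x y, |U x y| ≤ 1 := abs_graphon_sub_le_one G G'
  set Φ : (V → ℝ) → ℝ := fun x => U (x u) (x w) * edgeProd K E x with hΦdef
  have hΦ : Measurable Φ :=
    (hU.comp (measurable_eval_pair u w)).mul
      (measurable_edgeProd K E)
  have hΦ1 : ∀ x, |Φ x| ≤ 1 := fun x => by
    rw [hΦdef, abs_mul, abs_of_nonneg (edgeProd_nonneg K E x)]
    exact mul_le_one₀ (hU1 _ _) (edgeProd_nonneg K E x) (edgeProd_le_one K E x)
  have hmp := measurePreserving_glue (fun v => volume.restrict (F v)) huw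
  change |∫ x, Φ x ∂(Measure.pi fun v => volume.restrict (F v))| ≤ _
  rw [← hmp.map_eq, integral_map (measurable_glue u w).aemeasurable hΦ.aestronglyMeasurable,
    integral_prod_symm (fun p => Φ (glue u w p))
      (integrable_of_abs_le_one (hΦ.comp (measurable_glue u w)) fun p => hΦ1 _)]
  have key : ∀ z : {v // v ∉ s(u, w)} → ℝ,
      ‖∫ p, Φ (glue u w (p, z)) ∂((volume.restrict (F u)).prod (volume.restrict (F w)))‖
        ≤ cutNorm U := by
    intro z
    have hmz : Measurable fun p : ℝ × ℝ => glue u w (p, z) :=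
      (measurable_glue u w).comp (measurable_id.prodMk measurable_const)
    rw [integral_prod (fun p => Φ (glue u w (p, z)))
      (integrable_of_abs_le_one (hΦ.comp hmz) fun p => hΦ1 _), Real.norm_eq_abs]
    -- The factors of edges avoiding `w` do not involve `x_w`; those of edges through `w` do not
    -- involve `x_u`, as `uw` is not among them. The coordinate not involved is set to `0`.
    set f : ℝ → ℝ := fun a => edgeProd K (E.filter fun e => w ∉ e) (glue u w ((a, 0), z)) with hf
    set g : ℝ → ℝ := fun b => edgeProd K (E.filter fun e => w ∈ e) (glue u w ((0, b), z)) with hg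
    have hsplit : ∀ a b, Φ (glue u w ((a, b), z)) = U a b * (f a * g b) := by
      intro a b
      have hP : edgeProd K E (glue u w ((a, b), z)) = g b * f a := by
        have h1 : g b = edgeProd K (E.filter fun e => w ∈ e) (glue u w ((a, b), z)) := by
          refine edgeProd_congr _ _ fun e he v hv => ?_
          rw [Finset.mem_filter] at he
          have hvu : v ≠ u := by
            rintro rfl
            exact hE ((Sym2.mem_and_mem_iff huw).mp ⟨hv, he.2⟩ ▸ he.1)
          simp [glue, hvu]
        have h2 : f a = edgeProd K (E.filter fun e => w ∉ e) (glue u w ((a, b), z)) := by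
          refine edgeProd_congr _ _ fun e he v hv => ?_
          rw [Finset.mem_filter] at he
          have hvw : v ≠ w := by
            rintro rfl
            exact he.2 hv
          by_cases hvu : v = u <;> simp [glue, hvu, hvw]
        rw [h1, h2]
        exact (Finset.prod_filter_mul_prod_filter_not E (fun e => w ∈ e) _).symm
      have hu : glue u w ((a, b), z) u = a := by simp [glue]
      have hw : glue u w ((a, b), z) w = b := by simp [glue, huw.symm]
      rw [hΦdef]
      simp only [hP, hu, hw]
      ring
    simp_rw [hsplit]
    refine abs_integral_mul_mul_le_cutNorm hU hU1 (hFmeas u) (hFmeas w) (hFsub u) (hFsub w)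
      ((measurable_edgeProd _ _).comp (hmz.comp (measurable_id.prodMk measurable_const)))
      ((measurable_edgeProd _ _).comp (hmz.comp (measurable_const.prodMk measurable_id)))
      (fun _ => edgeProd_nonneg _ _ _) (fun _ => edgeProd_le_one _ _ _)
      (fun _ => edgeProd_nonneg _ _ _) (fun _ => edgeProd_le_one _ _ _)
  refine (norm_integral_le_of_norm_le_const (ae_of_all _ key)).trans_eq ?_
  rw [mul_comm, measureReal_def, Measure.pi_univ, ENNReal.toReal_prod]
  congr 1
  simp only [Measure.restrict_apply_univ]
  exact (Finset.prod_subtype _ (by simp) (fun v => (volume (F v)).toReal)).symm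

/-! ### Replacing the graphons edge by edge -/

lemma tGen_eq (H : SimpleGraph V) [DecidableRel H.Adj] (K : Sym2 V → Graphon) (F : V → Set ℝ) :
    tGen H K F =
      ∫ x, edgeProd K H.edgeFinset x ∂(Measure.pi fun v => volume.restrict (F v)) := rfl

/-- The counting lemma for two families that differ at a single edge. -/
lemma tGen_sub_le_of_eq_off (H : SimpleGraph V) [DecidableRel H.Adj] (K K' : Sym2 V → Graphon)
    (F : V → Set ℝ) (hFmeas : ∀ v, MeasurableSet (F v)) (hFsub : ∀ v, F v ⊆ I01)
    {e : Sym2 V} (he : e ∈ H.edgeFinset) (hoff : ∀ e' ≠ e, K e' = K' e') :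
    |tGen H K F - tGen H K' F| ≤
      (∏ v ∈ Finset.univ.filter (fun v => v ∉ e), (volume (F v)).toReal) *
        min (∏ v ∈ Finset.univ.filter (fun v => v ∈ e), (volume (F v)).toReal)
          (cutNorm fun x y => (K e).W x y - (K' e).W x y) := by
  have fin : ∀ v, IsFiniteMeasure (volume.restrict (F v)) := fun v =>
    ⟨by simpa using volume_lt_top_of_subset_I01 (hFsub v)⟩
  have hint : ∀ L : Sym2 V → Graphon, Integrable (edgeProd L H.edgeFinset)
      (Measure.pi fun v => volume.restrict (F v)) := fun L =>
    integrable_of_abs_le_one (measurable_edgeProd _ _) fun x => by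
      rw [abs_of_nonneg (edgeProd_nonneg _ _ _)]
      exact edgeProd_le_one _ _ _
  rw [tGen_eq, tGen_eq, ← integral_sub (hint K) (hint K'),
    mul_min_of_nonneg _ _ (Finset.prod_nonneg fun _ _ => ENNReal.toReal_nonneg)]
  refine le_min ?_ ?_
  · rw [mul_comm, Finset.prod_filter_mul_prod_filter_not]
    refine (norm_integral_le_of_norm_le_const
      (μ := Measure.pi fun v => volume.restrict (F v))
      (f := fun x => edgeProd K H.edgeFinset x - edgeProd K' H.edgeFinset x)
      (C := 1) (ae_of_all _ fun x => ?_)).trans_eq ?_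
    · exact abs_sub_le_one_of_unit (edgeProd_nonneg _ _ _) (edgeProd_le_one _ _ _)
        (edgeProd_nonneg _ _ _) (edgeProd_le_one _ _ _)
    · rw [one_mul, measureReal_def, Measure.pi_univ, ENNReal.toReal_prod]
      simp only [Measure.restrict_apply_univ]
  · have hrw : ∀ x, edgeProd K H.edgeFinset x - edgeProd K' H.edgeFinset x =
        (edgeVal (K e) e x - edgeVal (K' e) e x) * edgeProd K (H.edgeFinset.erase e) x := by
      intro x
      have h' : edgeProd K (H.edgeFinset.erase e) x = edgeProd K' (H.edgeFinset.erase e) x :=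
        Finset.prod_congr rfl fun e' he' => by rw [hoff e' (Finset.ne_of_mem_erase he')]
      rw [sub_mul]
      nth_rewrite 2 [h']
      unfold edgeProd
      rw [Finset.mul_prod_erase _ (fun e => edgeVal (K e) e x) he,
        Finset.mul_prod_erase _ (fun e => edgeVal (K' e) e x) he]
    simp_rw [hrw]
    have hadj : e ∈ H.edgeSet := SimpleGraph.mem_edgeFinset.mp he
    clear he hrw
    induction e with
    | h u w =>
      exact abs_integral_edge_le (K s(u, w)) (K' s(u, w)) K _ (SimpleGraph.Adj.ne hadj)
        (Finset.notMem_erase _ _) F hFmeas hFsub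

end Edge

/-- **Generalized Counting Lemma.** For a finite simple graph `H`, families of graphons
`W_e`, `W'_e` indexed by the edges, and measurable sets `F_v ⊆ [0,1]` indexed by the
vertices:
`|t_F(H,W) − t_F(H,W')| ≤ Σ_{e ∈ E(H)} (∏_{v ∉ e} μ(F_v)) · min{∏_{v ∈ e} μ(F_v), ‖W_e − W'_e‖_□}`. -/
theorem generalized_counting_lemma
    {V : Type*} [Fintype V] [DecidableEq V] (H : SimpleGraph V)
    [DecidableRel H.Adj] (Wf Wf' : Sym2 V → Graphon) (F : V → Set ℝ)
    (hFmeas : ∀ v, MeasurableSet (F v)) (hFsub : ∀ v, F v ⊆ I01) :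
    |tGen H Wf F - tGen H Wf' F|
      ≤ ∑ e ∈ H.edgeFinset,
          (∏ v ∈ Finset.univ.filter (fun v => v ∉ e), (volume (F v)).toReal) *
            min (∏ v ∈ Finset.univ.filter (fun v => v ∈ e), (volume (F v)).toReal)
              (cutNorm fun x y => (Wf e).W x y - (Wf' e).W x y) := by
  have main : ∀ S ⊆ H.edgeFinset,
      |tGen H (fun e => if e ∈ S then Wf e else Wf' e) F - tGen H Wf' F| ≤
        ∑ e ∈ S, (∏ v ∈ Finset.univ.filter (fun v => v ∉ e), (volume (F v)).toReal) *
          min (∏ v ∈ Finset.univ.filter (fun v => v ∈ e), (volume (F v)).toReal)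
            (cutNorm fun x y => (Wf e).W x y - (Wf' e).W x y) := by
    intro S
    induction S using Finset.induction_on with
    | empty => simp
    | insert e S heS ih =>
      intro hS
      rw [Finset.insert_subset_iff] at hS
      rw [Finset.sum_insert heS]
      have step := tGen_sub_le_of_eq_off H (fun e' => if e' ∈ insert e S then Wf e' else Wf' e')
        (fun e' => if e' ∈ S then Wf e' else Wf' e') F hFmeas hFsub hS.1
        (fun e' he' => by simp [he'])
      simp only [Finset.mem_insert_self, if_true, heS, if_false] at step
      exact (abs_sub_le _ _ _).trans (add_le_add step (ih hS.2))
  refine le_of_eq_of_le ?_ (main H.edgeFinset subset_rfl)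
  congr 2
  rw [tGen_eq, tGen_eq]
  congr 1 with x
  exact Finset.prod_congr rfl fun e he => by simp only [he, if_true]

end
end
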